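/- For every positive integer j, the limit lim_{m→∞} λ_j^{(m)} exists and equals β_j; that is, the j-th eigenvalue of the truncated matrix A_m converges, as m → ∞, to the j-th min-max value of the operator L = −Δ − V on the torus ℝ²/Γ. -/

import Mathlib

open MeasureTheory Filter Real

noncomputable section

/-- The Laplacian `Δf = f_xx + f_yy` on `ℝ²`. -/
def lap (f : ℝ × ℝ → ℝ) (z : ℝ × ℝ) : ℝ :=
  deriv (fun x => deriv (fun x' => f (x', z.2)) x) z.1 +
  deriv (fun y => deriv (fun y' => f (z.1, y')) y) z.2

/-- `f` is periodic with respect to the lattice `ℤv₁ + ℤv₂`. -/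
def LatPeriodic (v₁ v₂ : ℝ × ℝ) (f : ℝ × ℝ → ℝ) : Prop :=
  ∀ z : ℝ × ℝ, f (z + v₁) = f z ∧ f (z + v₂) = f z

/-- The fundamental parallelogram `{s v₁ + t v₂ : s, t ∈ [0,1)}`. -/
def fundDom (v₁ v₂ : ℝ × ℝ) : Set (ℝ × ℝ) :=
  {z | ∃ s t : ℝ, s ∈ Set.Ico (0:ℝ) 1 ∧ t ∈ Set.Ico (0:ℝ) 1 ∧ z = s • v₁ + t • v₂}

/-- The `L²` inner product over the fundamental domain. -/
def l2 (v₁ v₂ : ℝ × ℝ) (f g : ℝ × ℝ → ℝ) : ℝ :=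
  ∫ z in fundDom v₁ v₂, f z * g z

/-- The quadratic form of the operator `L = −Δ − V`. -/
def Qf (v₁ v₂ : ℝ × ℝ) (V : ℝ × ℝ → ℝ) (u : ℝ × ℝ → ℝ) : ℝ :=
  ∫ z in fundDom v₁ v₂, u z * (-(lap u z) - V z * u z)

/-- The set of smooth `Γ`-periodic functions. -/
def SmoothPer (v₁ v₂ : ℝ × ℝ) : Set (ℝ × ℝ → ℝ) :=
  {f | ContDiff ℝ (⊤ : ℕ∞) f ∧ LatPeriodic v₁ v₂ f}

/-- The min-max values `β_j` of `L = −Δ − V`. -/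
def minmax (v₁ v₂ : ℝ × ℝ) (V : ℝ × ℝ → ℝ) (j : ℕ) : ℝ :=
  sInf { c : ℝ | ∃ W : Submodule ℝ (ℝ × ℝ → ℝ),
    (W : Set (ℝ × ℝ → ℝ)) ⊆ SmoothPer v₁ v₂ ∧
    Module.finrank ℝ W = j ∧
    c = sSup { q : ℝ | ∃ φ ∈ W, l2 v₁ v₂ φ φ = 1 ∧ q = Qf v₁ v₂ V φ } }

/-- The truncated matrix `A_m` with entries `α_i δ_ij − b_ij`. -/
def Amat (v₁ v₂ : ℝ × ℝ) (V : ℝ × ℝ → ℝ) (u : ℕ → ℝ × ℝ → ℝ) (α : ℕ → ℝ) (m : ℕ) :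
    Matrix (Fin m) (Fin m) ℝ :=
  Matrix.of fun i j =>
    (if i = j then α i.1 else 0) - ∫ z in fundDom v₁ v₂, V z * u i.1 z * u j.1 z



theorem negdef_eventually {H ι : Type*} [AddCommGroup H] [Module ℝ H] {l : Filter ι}
    (Φ : ι → H →ₗ[ℝ] H →ₗ[ℝ] ℝ) (Ψ : H →ₗ[ℝ] H →ₗ[ℝ] ℝ)
    (W : Submodule ℝ H) [FiniteDimensional ℝ W]
    (hlim : ∀ x ∈ W, ∀ y ∈ W, Tendsto (fun m => Φ m x y) l (nhds (Ψ x y)))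
    (hneg : ∀ w ∈ W, w ≠ 0 → Ψ w w < 0) :
    ∀ᶠ m in l, ∀ w ∈ W, w ≠ 0 → Φ m w w < 0 := by
  let bs := Module.finBasis ℝ W
  set n := Module.finrank ℝ W
  let G : (H →ₗ[ℝ] H →ₗ[ℝ] ℝ) → (Fin n → Fin n → ℝ) := fun B k l => B (bs k) (bs l)
  have key : ∀ (B : H →ₗ[ℝ] H →ₗ[ℝ] ℝ) (a : Fin n → ℝ),
      B (∑ k, a k • (bs k : H)) (∑ k, a k • (bs k : H)) = ∑ k, ∑ l, a k * a l * G B k l := by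
    intro B a
    simp only [map_sum, map_smul, LinearMap.sum_apply, LinearMap.smul_apply, smul_eq_mul, G,
      Finset.mul_sum]
    rw [Finset.sum_comm]
    refine Finset.sum_congr rfl fun k _ => Finset.sum_congr rfl fun l _ => by ring
  have hG : Tendsto (fun m => G (Φ m)) l (nhds (G Ψ)) := by
    rw [tendsto_pi_nhds]; intro k
    rw [tendsto_pi_nhds]; intro l
    exact hlim _ (bs k).2 _ (bs l).2
  have hrep : ∀ w : W, (w : H) = ∑ k, (bs.repr w k) • (bs k : H) := by
    intro w
    have h := congrArg Subtype.val (bs.sum_repr w)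
    simp only [AddSubmonoidClass.coe_finsetSum, Submodule.coe_smul] at h
    exact h.symm
  have hcomp : IsCompact (Metric.sphere (0 : Fin n → ℝ) 1) := isCompact_sphere _ _
  have hev := hcomp.eventually_forall_of_forall_eventually (x₀ := G Ψ)
    (P := fun g a => ∑ k, ∑ l, a k * a l * g k l < 0) (by
      intro a ha
      have hc : Continuous (fun z : (Fin n → Fin n → ℝ) × (Fin n → ℝ) =>
        ∑ k, ∑ l, z.2 k * z.2 l * z.1 k l) := by fun_prop
      have : ∑ k, ∑ l, a k * a l * G Ψ k l < 0 := by
        rw [← key]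
        apply hneg
        · exact W.sum_mem fun k _ => W.smul_mem _ (bs k).2
        · intro h0
          have h1 : ∑ k, a k • bs k = 0 := by
            apply Subtype.ext; simpa using h0
          have h2 := Fintype.linearIndependent_iff.1 bs.linearIndependent a h1
          have : a = 0 := funext h2
          simp [this] at ha
      exact hc.continuousAt.eventually (gt_mem_nhds this))
  filter_upwards [hG.eventually hev] with m hm w hw hw0
  set a : Fin n → ℝ := fun k => bs.repr ⟨w, hw⟩ k with ha
  have hwa : w = ∑ k, a k • (bs k : H) := hrep ⟨w, hw⟩
  have ha0 : a ≠ 0 := by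
    intro h; apply hw0; rw [hwa, h]; simp
  have hna : 0 < ‖a‖ := norm_pos_iff.2 ha0
  have h1 := hm (‖a‖⁻¹ • a) (by simp [norm_smul, hna.ne'])
  have h2 : ∑ k, ∑ l, (‖a‖⁻¹ • a) k * (‖a‖⁻¹ • a) l * G (Φ m) k l
      = (‖a‖⁻¹)^2 * ∑ k, ∑ l, a k * a l * G (Φ m) k l := by
    simp only [Finset.mul_sum, Pi.smul_apply, smul_eq_mul]
    refine Finset.sum_congr rfl fun k _ => Finset.sum_congr rfl fun l _ => by ring
  rw [h2, ← key, ← hwa] at h1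
  by_contra hcon
  push Not at hcon
  have := mul_nonneg (sq_nonneg (‖a‖⁻¹)) hcon
  linarith

section abstractH
variable {H : Type*} [NormedAddCommGroup H] [InnerProductSpace ℝ H]

def projN (e : ℕ → H) (m : ℕ) : H →ₗ[ℝ] H where
  toFun f := ∑ i ∈ Finset.range m, (inner ℝ (e i) f) • e i
  map_add' x y := by simp [inner_add_right, add_smul, Finset.sum_add_distrib]
  map_smul' c x := by simp [inner_smul_right, mul_smul, Finset.smul_sum]

theorem projN_apply (e : ℕ → H) (m : ℕ) (f : H) :
    projN e m f = ∑ i ∈ Finset.range m, (inner ℝ (e i) f) • e i := rfl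

theorem projN_norm_le (e : ℕ → H) (he : Orthonormal ℝ e) (m : ℕ) (f : H) :
    ‖projN e m f‖ ≤ ‖f‖ := by
  have h1 : ‖projN e m f‖ ^ 2 ≤ ‖f‖ ^ 2 := by
    have h := he.sum_inner_products_le (s := Finset.range m) f
    rw [← real_inner_self_eq_norm_sq, projN_apply, he.inner_sum]
    refine le_trans (le_of_eq ?_) h
    refine Finset.sum_congr rfl fun i _ => ?_
    simp [sq]
  exact (pow_le_pow_iff_left₀ (norm_nonneg _) (norm_nonneg _) two_ne_zero).1 h1

theorem projN_tendsto (e : ℕ → H) (he : Orthonormal ℝ e)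
    (hd : ∀ f : H, ∀ ε : ℝ, 0 < ε → ∃ g ∈ Submodule.span ℝ (Set.range e), ‖f - g‖ < ε) (f : H) :
    Tendsto (fun m => projN e m f) atTop (nhds f) := by
  have hs : ∀ g ∈ Submodule.span ℝ (Set.range e), ∀ᶠ m in atTop, projN e m g = g := by
    intro g hg
    induction hg using Submodule.span_induction with
    | mem x hx =>
      obtain ⟨i, rfl⟩ := hx
      filter_upwards [eventually_gt_atTop i] with m hm
      rw [projN_apply, Finset.sum_eq_single i]
      · simp [he.1 i]
      · intro k _ hk
        rw [he.2 hk, zero_smul]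
      · intro h; exact absurd (Finset.mem_range.2 hm) h
    | zero => simp
    | add x y _ _ hx hy =>
      filter_upwards [hx, hy] with m h1 h2
      rw [map_add, h1, h2]
    | smul c x _ hx =>
      filter_upwards [hx] with m h1
      rw [map_smul, h1]
  rw [Metric.tendsto_nhds]
  intro ε hε
  obtain ⟨g, hg, hfg⟩ := hd f (ε/2) (by linarith)
  filter_upwards [hs g hg] with m hm
  rw [dist_eq_norm]
  have : projN e m f - f = projN e m (f - g) - (f - g) := by
    rw [map_sub, hm]; abel
  rw [this]
  calc _ ≤ ‖projN e m (f - g)‖ + ‖f - g‖ := norm_sub_le _ _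
    _ ≤ ‖f - g‖ + ‖f - g‖ := by gcongr; exact projN_norm_le e he m _
    _ < ε := by linarith

theorem bil_tendsto (b : H →ₗ[ℝ] H →ₗ[ℝ] ℝ) (M : ℝ) (hb : ∀ x y, |b x y| ≤ M * ‖x‖ * ‖y‖)
    {x y : ℕ → H} {x0 y0 : H} (hx : Tendsto x atTop (nhds x0)) (hy : Tendsto y atTop (nhds y0)) :
    Tendsto (fun m => b (x m) (y m)) atTop (nhds (b x0 y0)) := by
  let B := LinearMap.mkContinuous₂ b M (by intro x y; simpa using hb x y)
  have : Tendsto (fun m => B (x m) (y m)) atTop (nhds (B x0 y0)) :=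
    (B.continuous₂.tendsto (x0, y0)).comp (hx.prodMk_nhds hy)
  simpa [B] using this

/-- the truncated form -/
def formN (L : H →ₗ[ℝ] H) (b : H →ₗ[ℝ] H →ₗ[ℝ] ℝ) (t : ℝ) (p : H →ₗ[ℝ] H) :
    H →ₗ[ℝ] H →ₗ[ℝ] ℝ :=
  LinearMap.mk₂ ℝ (fun x y => inner ℝ (p x) (L y) - b (p x) (p y) - t * inner ℝ (p x) (p y))
    (by intros; simp [inner_add_left]; ring)
    (by intros; simp [inner_smul_left]; ring)
    (by intros; simp [inner_add_right]; ring)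
    (by intros; simp [inner_smul_right]; ring)

theorem formN_apply (L : H →ₗ[ℝ] H) (b : H →ₗ[ℝ] H →ₗ[ℝ] ℝ) (t : ℝ) (p : H →ₗ[ℝ] H) (x y : H) :
    formN L b t p x y = inner ℝ (p x) (L y) - b (p x) (p y) - t * inner ℝ (p x) (p y) := rfl

theorem formN_tendsto (L : H →ₗ[ℝ] H) (b : H →ₗ[ℝ] H →ₗ[ℝ] ℝ) (M : ℝ)
    (hb : ∀ x y, |b x y| ≤ M * ‖x‖ * ‖y‖) (t : ℝ)
    (e : ℕ → H) (he : Orthonormal ℝ e)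
    (hd : ∀ f : H, ∀ ε : ℝ, 0 < ε → ∃ g ∈ Submodule.span ℝ (Set.range e), ‖f - g‖ < ε) (x y : H) :
    Tendsto (fun m => formN L b t (projN e m) x y) atTop
      (nhds (formN L b t LinearMap.id x y)) := by
  have hx := projN_tendsto e he hd x
  have hy := projN_tendsto e he hd y
  simp only [formN_apply]
  exact ((hx.inner tendsto_const_nhds).sub (bil_tendsto b M hb hx hy)).sub
    ((hx.inner hy).const_mul t)


/-- abstract truncated matrix -/
def AH (b : H →ₗ[ℝ] H →ₗ[ℝ] ℝ) (e : ℕ → H) (α : ℕ → ℝ) (m : ℕ) : Matrix (Fin m) (Fin m) ℝ :=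
  Matrix.of fun i j => (if i = j then α i.1 else 0) - b (e i.1) (e j.1)

theorem AH_quad (b : H →ₗ[ℝ] H →ₗ[ℝ] ℝ) (e : ℕ → H) (α : ℕ → ℝ) (m : ℕ) (c : Fin m → ℝ) :
    c ⬝ᵥ (AH b e α m).mulVec c = ∑ i, α i.1 * c i ^ 2
      - b (∑ i : Fin m, c i • e i.1) (∑ i : Fin m, c i • e i.1) := by
  simp only [dotProduct, Matrix.mulVec, AH, Matrix.of_apply, map_sum, map_smul,
    LinearMap.sum_apply, LinearMap.smul_apply, smul_eq_mul, sub_mul, Finset.sum_sub_distrib,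
    ite_mul, zero_mul, Finset.sum_ite_eq, Finset.mem_univ, if_true, mul_sub, Finset.mul_sum]
  congr 1
  · exact Finset.sum_congr rfl fun i _ => by ring
  · rw [Finset.sum_comm]
    exact Finset.sum_congr rfl fun i _ => Finset.sum_congr rfl fun k _ => by ring

theorem diag_quad {m : ℕ} (A P : Matrix (Fin m) (Fin m) ℝ) (d : Fin m → ℝ)
    (hA : A = P * Matrix.diagonal d * P.transpose) (c : Fin m → ℝ) :
    c ⬝ᵥ A.mulVec c = ∑ k, d k * (P.transpose.mulVec c k) ^ 2 := by
  rw [hA, ← Matrix.mulVec_mulVec, ← Matrix.mulVec_mulVec, Matrix.dotProduct_mulVec,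
    ← Matrix.mulVec_transpose]
  simp only [dotProduct, Matrix.mulVec_diagonal]
  exact Finset.sum_congr rfl fun i _ => by ring

theorem orth_quad {m : ℕ} (P : Matrix (Fin m) (Fin m) ℝ) 
    (hP : P * P.transpose = 1) (c : Fin m → ℝ) :
    ∑ i, c i ^ 2 = ∑ k, (P.transpose.mulVec c k) ^ 2 := by
  have h := diag_quad (1 : Matrix (Fin m) (Fin m) ℝ) P (fun _ => 1) (by simp [hP]) c
  simp only [Matrix.one_mulVec, one_mul] at h
  rw [← h]
  simp [dotProduct, sq]

theorem projN_fin (e : ℕ → H) (m : ℕ) (f : H) :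
    projN e m f = ∑ i : Fin m, (inner ℝ (e i.1) f) • e i.1 := by
  rw [projN_apply, Finset.sum_range]

theorem inner_projN (e : ℕ → H) (m : ℕ) (f g : H) :
    inner ℝ (projN e m f) g = ∑ i : Fin m, inner ℝ (e i.1) f * inner ℝ (e i.1) g := by
  rw [projN_fin, sum_inner]
  exact Finset.sum_congr rfl fun i _ => by rw [real_inner_smul_left]

theorem inner_e_projN (e : ℕ → H) (he : Orthonormal ℝ e) (m : ℕ) (f : H) (i : Fin m) :
    inner ℝ (e i.1) (projN e m f) = inner ℝ (e i.1) f := by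
  rw [projN_apply, he.inner_right_sum _ (Finset.mem_range.2 i.2)]

theorem formN_quad (L : H →ₗ[ℝ] H) (b : H →ₗ[ℝ] H →ₗ[ℝ] ℝ) (t : ℝ)
    (e : ℕ → H) (he : Orthonormal ℝ e) (α : ℕ → ℝ)
    (hL : ∀ i f, inner ℝ (e i) (L f) = α i * inner ℝ (e i) f) (m : ℕ) (f : H) :
    formN L b t (projN e m) f f =
      (fun i : Fin m => inner ℝ (e i.1) f) ⬝ᵥ
        (AH b e α m).mulVec (fun i : Fin m => inner ℝ (e i.1) f)
      - t * ∑ i : Fin m, (inner ℝ (e i.1) f) ^ 2 := by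
  rw [AH_quad, formN_apply, inner_projN, inner_projN]
  simp only [inner_e_projN e he, hL, ← projN_fin]
  congr 1
  · congr 1
    exact Finset.sum_congr rfl fun i _ => by ring
  · congr 1
    exact Finset.sum_congr rfl fun i _ => by ring

theorem L_nonneg (L : H →ₗ[ℝ] H) (e : ℕ → H) (he : Orthonormal ℝ e) (α : ℕ → ℝ)
    (hα : ∀ i, 0 ≤ α i)
    (hL : ∀ i f, inner ℝ (e i) (L f) = α i * inner ℝ (e i) f)
    (hd : ∀ f : H, ∀ ε : ℝ, 0 < ε → ∃ g ∈ Submodule.span ℝ (Set.range e), ‖f - g‖ < ε) (f : H) :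
    0 ≤ inner ℝ f (L f) := by
  have h : Tendsto (fun m => inner ℝ (projN e m f) (L f)) atTop (nhds (inner ℝ f (L f))) :=
    (projN_tendsto e he hd f).inner tendsto_const_nhds
  refine ge_of_tendsto' h fun m => ?_
  rw [inner_projN]
  refine Finset.sum_nonneg fun i _ => ?_
  rw [hL]
  nlinarith [hα i, sq_nonneg (inner ℝ (e i.1) f : ℝ), mul_nonneg (hα i) (sq_nonneg (inner ℝ (e i.1) f : ℝ))]

/-- set of Rayleigh values -/
def rq (L : H →ₗ[ℝ] H) (b : H →ₗ[ℝ] H →ₗ[ℝ] ℝ) (W : Submodule ℝ H) : Set ℝ :=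
  {q : ℝ | ∃ φ ∈ W, inner ℝ φ φ = (1:ℝ) ∧ q = inner ℝ φ (L φ) - b φ φ}

theorem rq_bdd (L : H →ₗ[ℝ] H) (b : H →ₗ[ℝ] H →ₗ[ℝ] ℝ) (W : Submodule ℝ H)
    [FiniteDimensional ℝ W] : BddAbove (rq L b W) := by
  let N : H →ₗ[ℝ] H →ₗ[ℝ] ℝ := formN 0 0 1 LinearMap.id
  let B : H →ₗ[ℝ] H →ₗ[ℝ] ℝ := formN L b 0 LinearMap.id
  have h := negdef_eventually (l := atTop) (fun n : ℕ => ((1:ℝ)/((n:ℝ)+1)) • B + N) N W (by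
      intro x _ y _
      have : Tendsto (fun n : ℕ => ((1:ℝ)/((n:ℝ)+1)) * B x y + N x y) atTop
        (nhds (0 * B x y + N x y)) :=
        (tendsto_one_div_add_atTop_nhds_zero_nat.mul_const _).add_const _
      simpa using this) (by
      intro w _ hw
      simp only [N, formN_apply]
      have := real_inner_self_pos.2 hw
      simp only [LinearMap.zero_apply, inner_zero_right, LinearMap.id_apply]
      linarith)
  obtain ⟨n, hn⟩ := h.exists
  refine ⟨(n:ℝ)+1, ?_⟩
  rintro q ⟨φ, hφ, h1, rfl⟩
  have hφ0 : φ ≠ 0 := by rintro rfl; simp at h1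
  have := hn φ hφ hφ0
  simp only [LinearMap.add_apply, LinearMap.smul_apply, B, N, formN_apply, LinearMap.id_apply,
    smul_eq_mul, h1, LinearMap.zero_apply, inner_zero_right] at this
  have hp : (0:ℝ) < (n:ℝ)+1 := by positivity
  field_simp at this
  linarith

theorem rq_nonempty (L : H →ₗ[ℝ] H) (b : H →ₗ[ℝ] H →ₗ[ℝ] ℝ) (W : Submodule ℝ H)
    (hW : 0 < Module.finrank ℝ W) : (rq L b W).Nonempty := by
  have : Nontrivial W := Module.nontrivial_of_finrank_pos hW
  obtain ⟨w, hw⟩ := exists_ne (0 : W)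
  have hw' : (w : H) ≠ 0 := by simpa using hw
  refine ⟨_, (‖(w:H)‖⁻¹) • (w:H), W.smul_mem _ w.2, ?_, rfl⟩
  rw [real_inner_self_eq_norm_sq, norm_smul, norm_inv, norm_norm,
    inv_mul_cancel₀ (norm_ne_zero_iff.2 hw')]
  norm_num

theorem rq_le (L : H →ₗ[ℝ] H) (b : H →ₗ[ℝ] H →ₗ[ℝ] ℝ) (W : Submodule ℝ H)
    [FiniteDimensional ℝ W] (w : H) (hw : w ∈ W) :
    inner ℝ w (L w) - b w w ≤ sSup (rq L b W) * inner ℝ w w := by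
  by_cases h0 : w = 0
  · simp [h0]
  have hn : 0 < ‖w‖ := norm_pos_iff.2 h0
  have h : inner ℝ (‖w‖⁻¹ • w) (L (‖w‖⁻¹ • w)) - b (‖w‖⁻¹ • w) (‖w‖⁻¹ • w) ≤ sSup (rq L b W) := by
    refine le_csSup (rq_bdd L b W) ⟨_, W.smul_mem _ hw, ?_, rfl⟩
    rw [real_inner_self_eq_norm_sq, norm_smul, norm_inv, norm_norm,
      inv_mul_cancel₀ hn.ne']
    norm_num
  simp only [map_smul, LinearMap.smul_apply, real_inner_smul_left, real_inner_smul_right,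
    smul_eq_mul] at h
  rw [real_inner_self_eq_norm_sq]
  field_simp at h
  linarith

theorem abs_main (L : H →ₗ[ℝ] H) (b : H →ₗ[ℝ] H →ₗ[ℝ] ℝ) (M : ℝ)
    (hb : ∀ x y, |b x y| ≤ M * ‖x‖ * ‖y‖)
    (e : ℕ → H) (he : Orthonormal ℝ e) (α : ℕ → ℝ) (hα : ∀ i, 0 ≤ α i)
    (hL : ∀ i f, inner ℝ (e i) (L f) = α i * inner ℝ (e i) f)
    (hd : ∀ f : H, ∀ ε : ℝ, 0 < ε → ∃ g ∈ Submodule.span ℝ (Set.range e), ‖f - g‖ < ε)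
    (lam : (m : ℕ) → Fin m → ℝ)
    (hmono : ∀ m, Monotone (lam m))
    (hdiag : ∀ m, ∃ P : Matrix (Fin m) (Fin m) ℝ, P * P.transpose = 1 ∧
      AH b e α m = P * Matrix.diagonal (lam m) * P.transpose)
    (j : ℕ) (hlt : ∀ k : ℕ, j < j + 1 + k) :
    Tendsto (fun k : ℕ => lam (j + 1 + k) ⟨j, hlt k⟩) atTop
      (nhds (sInf {c : ℝ | ∃ W : Submodule ℝ H, Module.finrank ℝ W = j + 1 ∧
        c = sSup (rq L b W)})) := by
  set S := {c : ℝ | ∃ W : Submodule ℝ H, Module.finrank ℝ W = j + 1 ∧ c = sSup (rq L b W)} with hS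
  have hbdd : BddBelow S := by
    refine ⟨-M, ?_⟩
    rintro c ⟨W, hW, rfl⟩
    have : FiniteDimensional ℝ W := Module.finite_of_finrank_pos (by omega)
    obtain ⟨q, hq⟩ := rq_nonempty L b W (by omega)
    refine le_trans ?_ (le_csSup (rq_bdd L b W) hq)
    obtain ⟨φ, hφ, h1, rfl⟩ := hq
    have h2 := L_nonneg L e he α hα hL hd φ
    have h3 := hb φ φ
    rw [mul_assoc, ← sq, ← real_inner_self_eq_norm_sq, h1] at h3
    have := le_abs_self (b φ φ)
    linarith
  -- upper: β ≤ λ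
  have hlow : ∀ m (hm : j < m), lam m ⟨j, hm⟩ ∈ upperBounds {sInf S} ∧ S.Nonempty := by
    intro m hm
    obtain ⟨P, hP, hA⟩ := hdiag m
    have hP' : P.transpose * P = 1 := by
      exact mul_eq_one_comm.1 hP
    -- linear map ℝ^{j+1} → H
    let ι : Fin (j+1) → Fin m := fun k => ⟨k.1, by omega⟩
    have hι : Function.Injective ι := fun a c h => by
      simpa [ι, Fin.ext_iff] using h
    let cv : (Fin (j+1) → ℝ) →ₗ[ℝ] (Fin m → ℝ) :=
      P.mulVecLin ∘ₗ Function.ExtendByZero.linearMap ℝ ι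
    let T : (Fin (j+1) → ℝ) →ₗ[ℝ] H := (Fintype.linearCombination ℝ (fun i : Fin m => e i.1)) ∘ₗ cv
    have hT : ∀ a, T a = ∑ i : Fin m, cv a i • e i.1 := fun a => by
      simp [T, Fintype.linearCombination_apply]
    have hTin : ∀ a (i : Fin m), inner ℝ (e i.1) (T a) = cv a i := by
      intro a i
      have he' : Orthonormal ℝ (fun i : Fin m => e i.1) := he.comp _ Fin.val_injective
      rw [hT]
      exact he'.inner_right_fintype _ _
    have hPT : ∀ a, P.transpose.mulVec (cv a) = Function.extend ι a 0 := by
      intro a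
      simp only [cv, LinearMap.comp_apply, Matrix.mulVecLin_apply, Matrix.mulVec_mulVec, hP',
        Matrix.one_mulVec]
      rfl
    have hsum : ∀ (d : Fin m → ℝ) (a : Fin (j+1) → ℝ),
        ∑ k, d k * (Function.extend ι a 0 k)^2 = ∑ k, d (ι k) * a k ^ 2 := by
      intro d a
      rw [← Finset.sum_subset (Finset.subset_univ (Finset.univ.image ι))]
      · rw [Finset.sum_image (fun x _ y _ h => hι h)]
        exact Finset.sum_congr rfl fun k _ => by rw [hι.extend_apply]
      · intro x _ hx
        rw [Function.extend_apply']
        · simp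
        · rintro ⟨k, rfl⟩; exact hx (by simp)
    have hproj : ∀ a, projN e m (T a) = T a := by
      intro a
      rw [projN_fin, hT a]
      refine Finset.sum_congr rfl fun i _ => ?_
      rw [← hT, hTin]
    have hN : ∀ a, inner ℝ (T a) (T a) = ∑ k, a k ^ 2 := by
      intro a
      conv_lhs => rw [← hproj a]
      rw [inner_projN]
      simp only [inner_e_projN e he, hTin]
      have := orth_quad P hP (cv a)
      rw [hPT] at this
      have h2 := hsum (fun _ => 1) a
      simp only [one_mul] at h2
      rw [← h2, ← this]
      exact Finset.sum_congr rfl fun i _ => by ring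
    have hQ : ∀ a, inner ℝ (T a) (L (T a)) - b (T a) (T a) = ∑ k, lam m (ι k) * a k ^ 2 := by
      intro a
      have h1 := formN_quad L b 0 e he α hL m (T a)
      rw [formN_apply, hproj, diag_quad _ P _ hA] at h1
      have h3 : (fun i : Fin m => inner ℝ (e i.1) (T a)) = cv a := funext (hTin a)
      rw [h3, hPT, hsum] at h1
      linarith
    have hTinj : Function.Injective T := by
      rw [← LinearMap.ker_eq_bot, LinearMap.ker_eq_bot']
      intro a ha
      have := hN a
      rw [ha, inner_zero_left] at this
      have := (Finset.sum_eq_zero_iff_of_nonneg (fun i _ => sq_nonneg (a i))).1 this.symm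
      funext i
      simpa using this i (Finset.mem_univ _)
    have hfr : Module.finrank ℝ (LinearMap.range T) = j + 1 := by
      rw [LinearMap.finrank_range_of_inj hTinj]; simp
    have hmem : sSup (rq L b (LinearMap.range T)) ∈ S := ⟨_, hfr, rfl⟩
    refine ⟨?_, ⟨_, hmem⟩⟩
    rintro x rfl
    refine (csInf_le hbdd hmem).trans ?_
    refine csSup_le (rq_nonempty L b _ (by omega)) ?_
    rintro q ⟨_, ⟨a, rfl⟩, h1, rfl⟩
    rw [hQ]
    rw [hN] at h1
    calc _ ≤ ∑ k, lam m ⟨j, hm⟩ * a k ^ 2 := by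
          refine Finset.sum_le_sum fun k _ => mul_le_mul_of_nonneg_right ?_ (sq_nonneg _)
          apply hmono
          simp only [ι, Fin.mk_le_mk]; omega
      _ = _ := by rw [← Finset.mul_sum, h1, mul_one]
  have hne : S.Nonempty := (hlow (j+1) (by omega)).2
  rw [tendsto_order]
  constructor
  · intro a ha
    refine Eventually.of_forall fun k => ?_
    exact lt_of_lt_of_le ha ((hlow (j+1+k) (hlt k)).1 rfl)
  · intro a ha
    obtain ⟨c, ⟨W, hW, rfl⟩, hca⟩ := exists_lt_of_csInf_lt hne ha
    have : FiniteDimensional ℝ W := Module.finite_of_finrank_pos (by omega)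
    have hev := negdef_eventually (l := atTop) (fun m => formN L b a (projN e m))
      (formN L b a LinearMap.id) W
      (fun x _ y _ => formN_tendsto L b M hb a e he hd x y) (by
        intro w hw hw0
        have h1 := rq_le L b W w hw
        have h2 := real_inner_self_pos.2 hw0
        simp only [formN_apply, LinearMap.id_apply]
        nlinarith)
    have hshift : Tendsto (fun k : ℕ => j + 1 + k) atTop atTop :=
      tendsto_atTop_mono (fun k => by simp only [id]; omega) tendsto_id
    filter_upwards [hshift.eventually hev] with k hk
    set m := j + 1 + k with hmdef
    have hm : j < m := hlt k
    change lam m ⟨j, hm⟩ < a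
    by_contra hcon
    push Not at hcon
    obtain ⟨P, hP, hA⟩ := hdiag m
    let R : W →ₗ[ℝ] (Fin j → ℝ) :=
      LinearMap.pi fun k => ∑ i : Fin m, P i ⟨k.1, by omega⟩ • ((innerₗ H (e i.1)) ∘ₗ W.subtype)
    have hker : LinearMap.ker R ≠ ⊥ := LinearMap.ker_ne_bot_of_finrank_lt (by simp [hW])
    obtain ⟨w, hwR, hw0⟩ := Submodule.exists_mem_ne_zero_of_ne_bot hker
    have hneg := hk w w.2 (by simpa using hw0)
    rw [formN_quad L b a e he α hL, diag_quad _ P _ hA, orth_quad P hP, Finset.mul_sum,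
      ← Finset.sum_sub_distrib] at hneg
    refine absurd hneg (not_lt.2 (Finset.sum_nonneg fun i _ => ?_))
    rw [← sub_mul]
    by_cases hi : i.1 < j
    · have h0 := congrFun (LinearMap.mem_ker.1 hwR) ⟨i.1, hi⟩
      have : P.transpose.mulVec (fun i : Fin m => inner ℝ (e i.1) (w : H)) i = 0 := by
        simpa [R, Matrix.mulVec, dotProduct] using h0
      rw [this]; simp
    · refine mul_nonneg ?_ (sq_nonneg _)
      have : lam m ⟨j, hm⟩ ≤ lam m i := hmono m (by simp only [Fin.le_def]; omega)
      linarith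

end abstractH

section concrete

/-- coordinates map -/
def cmap (v₁ v₂ : ℝ × ℝ) : (ℝ × ℝ) →L[ℝ] (ℝ × ℝ) :=
  (ContinuousLinearMap.fst ℝ ℝ ℝ).smulRight v₁ + (ContinuousLinearMap.snd ℝ ℝ ℝ).smulRight v₂

theorem cmap_apply (v₁ v₂ p : ℝ × ℝ) : cmap v₁ v₂ p = p.1 • v₁ + p.2 • v₂ := rfl

theorem cmap_inj {v₁ v₂ : ℝ × ℝ} (h : LinearIndependent ℝ ![v₁, v₂]) :
    Function.Injective (cmap v₁ v₂) := by
  rw [injective_iff_map_eq_zero]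
  intro p hp
  rw [cmap_apply] at hp
  have := LinearIndependent.pair_iff.1 h _ _ hp
  exact Prod.ext this.1 this.2

theorem cmap_surj {v₁ v₂ : ℝ × ℝ} (h : LinearIndependent ℝ ![v₁, v₂]) :
    Function.Surjective (cmap v₁ v₂) :=
  LinearMap.surjective_of_injective (f := (cmap v₁ v₂ : (ℝ × ℝ) →ₗ[ℝ] (ℝ × ℝ))) (cmap_inj h)

theorem fundDom_eq (v₁ v₂ : ℝ × ℝ) :
    fundDom v₁ v₂ = cmap v₁ v₂ '' (Set.Ico (0:ℝ) 1 ×ˢ Set.Ico (0:ℝ) 1) := by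
  ext z
  constructor
  · rintro ⟨s, t, hs, ht, rfl⟩
    exact ⟨(s, t), ⟨hs, ht⟩, rfl⟩
  · rintro ⟨⟨s, t⟩, ⟨hs, ht⟩, rfl⟩
    exact ⟨s, t, hs, ht, rfl⟩

theorem fundDom_swap (v₁ v₂ : ℝ × ℝ) : fundDom v₁ v₂ = fundDom v₂ v₁ := by
  ext z
  constructor
  · rintro ⟨s, t, hs, ht, rfl⟩
    exact ⟨t, s, ht, hs, add_comm _ _⟩
  · rintro ⟨s, t, hs, ht, rfl⟩
    exact ⟨t, s, ht, hs, add_comm _ _⟩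

/-- compact set containing the fundamental domain -/
def cpt (v₁ v₂ : ℝ × ℝ) : Set (ℝ × ℝ) := cmap v₁ v₂ '' (Set.Icc (0:ℝ) 1 ×ˢ Set.Icc (0:ℝ) 1)

theorem cpt_compact (v₁ v₂ : ℝ × ℝ) : IsCompact (cpt v₁ v₂) :=
  (isCompact_Icc.prod isCompact_Icc).image (cmap v₁ v₂).continuous

theorem fundDom_sub (v₁ v₂ : ℝ × ℝ) : fundDom v₁ v₂ ⊆ cpt v₁ v₂ := by
  rw [fundDom_eq]
  exact Set.image_mono (Set.prod_mono Set.Ico_subset_Icc_self Set.Ico_subset_Icc_self)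

theorem int_cont (v₁ v₂ : ℝ × ℝ) {f : ℝ × ℝ → ℝ} (hf : Continuous f) :
    IntegrableOn f (fundDom v₁ v₂) volume :=
  (hf.continuousOn.integrableOn_compact (cpt_compact v₁ v₂)).mono_set (fundDom_sub v₁ v₂)

theorem int_mulc (v₁ v₂ : ℝ × ℝ) {f g : ℝ × ℝ → ℝ} (hf : Continuous f) (hg : Continuous g) :
    IntegrableOn (fun z => f z * g z) (fundDom v₁ v₂) volume :=
  int_cont v₁ v₂ (hf.mul hg)

theorem fundDom_meas {v₁ v₂ : ℝ × ℝ} (h : LinearIndependent ℝ ![v₁, v₂]) :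
    MeasurableSet (fundDom v₁ v₂) := by
  rw [fundDom_eq]
  exact (measurableSet_Ico.prod measurableSet_Ico).image_of_continuousOn_injOn
    (cmap v₁ v₂).continuous.continuousOn (cmap_inj h).injOn

theorem int_fund {v₁ v₂ : ℝ × ℝ} (h : LinearIndependent ℝ ![v₁, v₂]) (f : ℝ × ℝ → ℝ) :
    ∫ z in fundDom v₁ v₂, f z = |(cmap v₁ v₂).det| *
      ∫ p in Set.Ico (0:ℝ) 1 ×ˢ Set.Ico (0:ℝ) 1, f (cmap v₁ v₂ p) := by
  rw [fundDom_eq, integral_image_eq_integral_abs_det_fderiv_smul volume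
    (measurableSet_Ico.prod measurableSet_Ico)
    (fun x _ => (cmap v₁ v₂).hasFDerivAt.hasFDerivWithinAt) (cmap_inj h).injOn]
  simp only [smul_eq_mul]
  rw [integral_const_mul]

theorem int_dir {v₁ v₂ : ℝ × ℝ} (h : LinearIndependent ℝ ![v₁, v₂]) {f : ℝ × ℝ → ℝ}
    (hf : ContDiff ℝ 1 f) (hp : LatPeriodic v₁ v₂ f) :
    ∫ z in fundDom v₁ v₂, fderiv ℝ f z v₂ = 0 := by
  rw [int_fund h]
  have hc : Continuous (fun p => fderiv ℝ f (cmap v₁ v₂ p) v₂) := by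
    have := hf.continuous_fderiv one_ne_zero
    have h2 := (cmap v₁ v₂).continuous
    fun_prop
  rw [Measure.volume_eq_prod, setIntegral_prod]
  · have : ∀ s : ℝ, ∫ t in Set.Ico (0:ℝ) 1, fderiv ℝ f (cmap v₁ v₂ (s, t)) v₂ = 0 := by
      intro s
      rw [integral_Ico_eq_integral_Ioc, ← intervalIntegral.integral_of_le zero_le_one]
      have hd : ∀ t ∈ Set.uIcc (0:ℝ) 1, HasDerivAt (fun t : ℝ => f (s • v₁ + t • v₂))
          (fderiv ℝ f (cmap v₁ v₂ (s, t)) v₂) t := by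
        intro t _
        have h1 : HasDerivAt (fun t : ℝ => s • v₁ + t • v₂) v₂ t := by
          simpa using ((hasDerivAt_id t).smul_const v₂).const_add (s • v₁)
        exact ((hf.differentiable one_ne_zero (s • v₁ + t • v₂)).hasFDerivAt).comp_hasDerivAt t h1
      rw [intervalIntegral.integral_eq_sub_of_hasDerivAt hd]
      · have := (hp (s • v₁)).2
        simp [this]
      · exact Continuous.intervalIntegrable (hc.comp (by fun_prop)) _ _
    simp [this]
  · rw [← Measure.volume_eq_prod]
    exact (hc.continuousOn.integrableOn_compact (isCompact_Icc.prod isCompact_Icc)).mono_set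
      (Set.prod_mono Set.Ico_subset_Icc_self Set.Ico_subset_Icc_self)

theorem LatPeriodic.swap {v₁ v₂ : ℝ × ℝ} {f : ℝ × ℝ → ℝ} (h : LatPeriodic v₁ v₂ f) :
    LatPeriodic v₂ v₁ f := fun z => ⟨(h z).2, (h z).1⟩

theorem int_fderiv {v₁ v₂ : ℝ × ℝ} (h : LinearIndependent ℝ ![v₁, v₂]) {f : ℝ × ℝ → ℝ}
    (hf : ContDiff ℝ 1 f) (hp : LatPeriodic v₁ v₂ f) (w : ℝ × ℝ) :
    ∫ z in fundDom v₁ v₂, fderiv ℝ f z w = 0 := by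
  obtain ⟨p, rfl⟩ := cmap_surj h w
  have h' : LinearIndependent ℝ ![v₂, v₁] := LinearIndependent.pair_symm_iff.1 h
  have h1 := int_dir h' hf hp.swap
  rw [← fundDom_swap] at h1
  have h2 := int_dir h hf hp
  have hcf := hf.continuous_fderiv one_ne_zero
  simp only [cmap_apply, map_add, map_smul, smul_eq_mul]
  rw [integral_add, integral_const_mul, integral_const_mul, h1, h2]
  · simp
  · exact int_cont v₁ v₂ (by fun_prop)
  · exact int_cont v₁ v₂ (by fun_prop)

theorem eq_zero_of_l2 {v₁ v₂ : ℝ × ℝ} (h : LinearIndependent ℝ ![v₁, v₂]) {f : ℝ × ℝ → ℝ}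
    (hf : Continuous f) (hp : LatPeriodic v₁ v₂ f) (h0 : l2 v₁ v₂ f f = 0) : f = 0 := by
  unfold l2 at h0
  rw [int_fund h] at h0
  have hdet : |(cmap v₁ v₂).det| ≠ 0 := by
    rw [abs_ne_zero]
    intro hd
    have : LinearMap.ker (cmap v₁ v₂ : (ℝ × ℝ) →ₗ[ℝ] (ℝ × ℝ)) = ⊥ :=
      LinearMap.ker_eq_bot.2 (cmap_inj h)
    exact (LinearMap.bot_lt_ker_of_det_eq_zero hd).ne' this
  have h1 := (mul_eq_zero.1 h0).resolve_left hdet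
  have hk : Continuous (fun p => f (cmap v₁ v₂ p)) := hf.comp (cmap v₁ v₂).continuous
  have hint : IntegrableOn (fun p => f (cmap v₁ v₂ p) * f (cmap v₁ v₂ p))
      (Set.Ico (0:ℝ) 1 ×ˢ Set.Ico (0:ℝ) 1) volume :=
    ((hk.mul hk).continuousOn.integrableOn_compact (isCompact_Icc.prod isCompact_Icc)).mono_set
      (Set.prod_mono Set.Ico_subset_Icc_self Set.Ico_subset_Icc_self)
  rw [setIntegral_eq_zero_iff_of_nonneg_ae (Eventually.of_forall fun p => mul_self_nonneg _) hint] at h1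
  have h2 : (fun p => f (cmap v₁ v₂ p) * f (cmap v₁ v₂ p))
      =ᵐ[volume.restrict (Set.Ioo (0:ℝ) 1 ×ˢ Set.Ioo (0:ℝ) 1)] 0 :=
    ae_restrict_of_ae_restrict_of_subset
      (Set.prod_mono Set.Ioo_subset_Ico_self Set.Ioo_subset_Ico_self) h1
  have h3 := Measure.eqOn_open_of_ae_eq h2 (isOpen_Ioo.prod isOpen_Ioo)
    (hk.mul hk).continuousOn continuousOn_const
  have h4 := h3.closure (hk.mul hk) continuous_const
  rw [closure_prod_eq, closure_Ioo zero_ne_one] at h4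
  funext z
  obtain ⟨⟨s, t⟩, rfl⟩ := cmap_surj h z
  have hp1 : Function.Periodic f v₁ := fun z => (hp z).1
  have hp2 : Function.Periodic f v₂ := fun z => (hp z).2
  have h5 := h4 (x := (Int.fract s, Int.fract t))
    ⟨⟨Int.fract_nonneg _, (Int.fract_lt_one _).le⟩, ⟨Int.fract_nonneg _, (Int.fract_lt_one _).le⟩⟩
  have h6 : f (cmap v₁ v₂ (Int.fract s, Int.fract t)) = 0 := by simpa using h5
  have h7 : cmap v₁ v₂ (s, t) = cmap v₁ v₂ (Int.fract s, Int.fract t) + ⌊s⌋ • v₁ + ⌊t⌋ • v₂ := by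
    simp only [cmap_apply, ← Int.cast_smul_eq_zsmul ℝ]
    conv_lhs => rw [← Int.fract_add_floor s, ← Int.fract_add_floor t]
    module
  rw [h7, hp2.zsmul, hp1.zsmul, h6]
  rfl

/-- directional derivative -/
def dd (w : ℝ × ℝ) (f : ℝ × ℝ → ℝ) (z : ℝ × ℝ) : ℝ := fderiv ℝ f z w

theorem dd_smooth (w : ℝ × ℝ) {f : ℝ × ℝ → ℝ} (hf : ContDiff ℝ (⊤ : ℕ∞) f) :
    ContDiff ℝ (⊤ : ℕ∞) (dd w f) := by
  unfold dd
  exact (hf.fderiv_right (m := (⊤ : ℕ∞)) (by simp)).clm_apply contDiff_const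

theorem dd_per {v₁ v₂ : ℝ × ℝ} (w : ℝ × ℝ) {f : ℝ × ℝ → ℝ} (hp : LatPeriodic v₁ v₂ f) :
    LatPeriodic v₁ v₂ (dd w f) := by
  intro z
  have h1 : (fun z => f (z + v₁)) = f := funext fun z => (hp z).1
  have h2 : (fun z => f (z + v₂)) = f := funext fun z => (hp z).2
  unfold dd
  constructor
  · rw [← fderiv_comp_add_right, h1]
  · rw [← fderiv_comp_add_right, h2]

theorem dd_add (w : ℝ × ℝ) {f g : ℝ × ℝ → ℝ} (hf : ContDiff ℝ (⊤ : ℕ∞) f)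
    (hg : ContDiff ℝ (⊤ : ℕ∞) g) : dd w (f + g) = dd w f + dd w g := by
  funext z
  unfold dd
  rw [fderiv_add (hf.differentiable (by simp) z) (hg.differentiable (by simp) z)]
  rfl

theorem dd_smul (w : ℝ × ℝ) (c : ℝ) {f : ℝ × ℝ → ℝ} (hf : ContDiff ℝ (⊤ : ℕ∞) f) :
    dd w (c • f) = c • dd w f := by
  funext z
  unfold dd
  rw [fderiv_const_smul (hf.differentiable (by simp) z)]
  rfl

theorem dd_mul (w : ℝ × ℝ) {f g : ℝ × ℝ → ℝ} (hf : ContDiff ℝ (⊤ : ℕ∞) f)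
    (hg : ContDiff ℝ (⊤ : ℕ∞) g) : dd w (f * g) = f * dd w g + g * dd w f := by
  funext z
  unfold dd
  rw [fderiv_mul (hf.differentiable (by simp) z) (hg.differentiable (by simp) z)]
  simp

theorem lap_eq {f : ℝ × ℝ → ℝ} (hf : ContDiff ℝ (⊤ : ℕ∞) f) :
    lap f = dd (1, 0) (dd (1, 0) f) + dd (0, 1) (dd (0, 1) f) := by
  have hx : ∀ {g : ℝ × ℝ → ℝ}, ContDiff ℝ (⊤ : ℕ∞) g → ∀ x y : ℝ,
      deriv (fun x' => g (x', y)) x = dd (1, 0) g (x, y) := by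
    intro g hg x y
    have h1 : HasDerivAt (fun x' : ℝ => (x', y)) ((1:ℝ), (0:ℝ)) x :=
      (hasDerivAt_id x).prodMk (hasDerivAt_const x y)
    exact ((hg.differentiable (by simp) (x, y)).hasFDerivAt.comp_hasDerivAt x h1).deriv
  have hy : ∀ {g : ℝ × ℝ → ℝ}, ContDiff ℝ (⊤ : ℕ∞) g → ∀ x y : ℝ,
      deriv (fun y' => g (x, y')) y = dd (0, 1) g (x, y) := by
    intro g hg x y
    have h1 : HasDerivAt (fun y' : ℝ => (x, y')) ((0:ℝ), (1:ℝ)) y :=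
      (hasDerivAt_const y x).prodMk (hasDerivAt_id y)
    exact ((hg.differentiable (by simp) (x, y)).hasFDerivAt.comp_hasDerivAt y h1).deriv
  funext z
  unfold lap
  simp only [hx hf, hy hf]
  rw [hx (dd_smooth _ hf), hy (dd_smooth _ hf)]
  rfl

theorem LatPeriodic.add {v₁ v₂ : ℝ × ℝ} {f g : ℝ × ℝ → ℝ} (hf : LatPeriodic v₁ v₂ f)
    (hg : LatPeriodic v₁ v₂ g) : LatPeriodic v₁ v₂ (f + g) := fun z => by
  simp [(hf z).1, (hf z).2, (hg z).1, (hg z).2]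

theorem LatPeriodic.mul {v₁ v₂ : ℝ × ℝ} {f g : ℝ × ℝ → ℝ} (hf : LatPeriodic v₁ v₂ f)
    (hg : LatPeriodic v₁ v₂ g) : LatPeriodic v₁ v₂ (f * g) := fun z => by
  simp [(hf z).1, (hf z).2, (hg z).1, (hg z).2]

theorem LatPeriodic.smul {v₁ v₂ : ℝ × ℝ} {f : ℝ × ℝ → ℝ} (c : ℝ) (hf : LatPeriodic v₁ v₂ f) :
    LatPeriodic v₁ v₂ (c • f) := fun z => by
  simp [(hf z).1, (hf z).2]

/-- smooth periodic functions -/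
def SP (v₁ v₂ : ℝ × ℝ) : Submodule ℝ (ℝ × ℝ → ℝ) where
  carrier := SmoothPer v₁ v₂
  add_mem' hf hg := ⟨hf.1.add hg.1, hf.2.add hg.2⟩
  zero_mem' := ⟨contDiff_const, fun _ => ⟨rfl, rfl⟩⟩
  smul_mem' c _ hf := ⟨hf.1.const_smul c, hf.2.smul c⟩

theorem ibp {v₁ v₂ : ℝ × ℝ} (h : LinearIndependent ℝ ![v₁, v₂]) {f g : ℝ × ℝ → ℝ}
    (hf : f ∈ SP v₁ v₂) (hg : g ∈ SP v₁ v₂) (w : ℝ × ℝ) :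
    l2 v₁ v₂ f (dd w (dd w g)) = - l2 v₁ v₂ (dd w f) (dd w g) := by
  have h1 := int_fderiv h ((hf.1.mul (dd_smooth w hg.1)).of_le (by simp)) (hf.2.mul (dd_per w hg.2)) w
  have h2 : ∀ z, fderiv ℝ (f * dd w g) z w = f z * dd w (dd w g) z + dd w f z * dd w g z := by
    intro z
    have := congrFun (dd_mul w hf.1 (dd_smooth w hg.1)) z
    simp only [Pi.add_apply, Pi.mul_apply] at this
    rw [mul_comm (dd w f z), ← this]; rfl
  have h3 : ∫ z in fundDom v₁ v₂, (f z * dd w (dd w g) z + dd w f z * dd w g z) = 0 := by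
    rw [← h1]
    exact integral_congr_ae (Eventually.of_forall fun z => (h2 z).symm)
  rw [integral_add] at h3
  · unfold l2; linarith
  · exact int_cont v₁ v₂ (hf.1.continuous.mul (dd_smooth w (dd_smooth w hg.1)).continuous)
  · exact int_cont v₁ v₂ ((dd_smooth w hf.1).continuous.mul (dd_smooth w hg.1).continuous)

theorem l2_comm (v₁ v₂ : ℝ × ℝ) (f g : ℝ × ℝ → ℝ) : l2 v₁ v₂ f g = l2 v₁ v₂ g f := by
  unfold l2; simp only [mul_comm]

theorem l2_add (v₁ v₂ : ℝ × ℝ) {f g k : ℝ × ℝ → ℝ} (hf : Continuous f) (hg : Continuous g)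
    (hk : Continuous k) : l2 v₁ v₂ f (g + k) = l2 v₁ v₂ f g + l2 v₁ v₂ f k := by
  unfold l2
  rw [← integral_add (int_mulc v₁ v₂ hf hg) (int_mulc v₁ v₂ hf hk)]
  simp only [Pi.add_apply, mul_add]

theorem l2_smul (v₁ v₂ : ℝ × ℝ) (c : ℝ) (f g : ℝ × ℝ → ℝ) :
    l2 v₁ v₂ f (c • g) = c * l2 v₁ v₂ f g := by
  unfold l2
  rw [← integral_const_mul]
  congr 1; funext z; simp; ring

theorem lap_mem {v₁ v₂ : ℝ × ℝ} {f : ℝ × ℝ → ℝ} (hf : f ∈ SP v₁ v₂) : lap f ∈ SP v₁ v₂ := by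
  rw [lap_eq hf.1]
  exact ⟨(dd_smooth _ (dd_smooth _ hf.1)).add (dd_smooth _ (dd_smooth _ hf.1)),
    (dd_per _ (dd_per _ hf.2)).add (dd_per _ (dd_per _ hf.2))⟩

theorem green {v₁ v₂ : ℝ × ℝ} (h : LinearIndependent ℝ ![v₁, v₂]) {f g : ℝ × ℝ → ℝ}
    (hf : f ∈ SP v₁ v₂) (hg : g ∈ SP v₁ v₂) :
    l2 v₁ v₂ f (lap g) = l2 v₁ v₂ g (lap f) := by
  have hc : ∀ {f : ℝ × ℝ → ℝ} (w : ℝ × ℝ), f ∈ SP v₁ v₂ → Continuous (dd w (dd w f)) :=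
    fun w hf => (dd_smooth w (dd_smooth w hf.1)).continuous
  rw [lap_eq hf.1, lap_eq hg.1, l2_add _ _ hf.1.continuous (hc _ hg) (hc _ hg),
    l2_add _ _ hg.1.continuous (hc _ hf) (hc _ hf), ibp h hf hg, ibp h hf hg, ibp h hg hf,
    ibp h hg hf, l2_comm _ _ (dd (1,0) f), l2_comm _ _ (dd (0,1) f)]

/-- minus the Laplacian -/
def Lop (v₁ v₂ : ℝ × ℝ) : SP v₁ v₂ →ₗ[ℝ] SP v₁ v₂ where
  toFun f := -⟨lap f, lap_mem f.2⟩
  map_add' f g := by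
    have : lap ((f : ℝ × ℝ → ℝ) + g) = lap f + lap g := by
      rw [lap_eq (SP v₁ v₂ |>.add_mem f.2 g.2).1, lap_eq f.2.1, lap_eq g.2.1, dd_add _ f.2.1 g.2.1,
        dd_add _ f.2.1 g.2.1, dd_add _ (dd_smooth _ f.2.1) (dd_smooth _ g.2.1),
        dd_add _ (dd_smooth _ f.2.1) (dd_smooth _ g.2.1)]
      abel
    apply Subtype.ext
    simp only [Submodule.coe_add, Submodule.coe_neg, this]
    abel
  map_smul' c f := by
    have : lap (c • (f : ℝ × ℝ → ℝ)) = c • lap f := by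
      rw [lap_eq (SP v₁ v₂ |>.smul_mem c f.2).1, lap_eq f.2.1, dd_smul _ _ f.2.1,
        dd_smul _ _ f.2.1, dd_smul _ _ (dd_smooth _ f.2.1), dd_smul _ _ (dd_smooth _ f.2.1),
        smul_add]
    apply Subtype.ext
    simp only [Submodule.coe_smul, Submodule.coe_neg, this, RingHom.id_apply, smul_neg]

/-- potential form -/
def bV (v₁ v₂ : ℝ × ℝ) (V : ℝ × ℝ → ℝ) (hV : Continuous V) :
    SP v₁ v₂ →ₗ[ℝ] SP v₁ v₂ →ₗ[ℝ] ℝ :=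
  LinearMap.mk₂ ℝ (fun f g => l2 v₁ v₂ (V * f) g)
    (by
      intro f g k
      simp only [Submodule.coe_add]
      rw [l2_comm, mul_add, l2_add _ _ k.2.1.continuous (hV.mul f.2.1.continuous)
        (hV.mul g.2.1.continuous), l2_comm, l2_comm _ _ (k : ℝ × ℝ → ℝ)])
    (by
      intro c f g
      simp only [Submodule.coe_smul]
      rw [l2_comm, mul_smul_comm, l2_smul, l2_comm]; rfl)
    (by
      intro f g k
      simp only [Submodule.coe_add]
      rw [l2_add _ _ (hV.mul f.2.1.continuous) g.2.1.continuous k.2.1.continuous])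
    (by
      intro c f g
      simp only [Submodule.coe_smul]
      rw [l2_smul]; rfl)

theorem bV_apply (v₁ v₂ : ℝ × ℝ) (V : ℝ × ℝ → ℝ) (hV : Continuous V) (f g : SP v₁ v₂) :
    bV v₁ v₂ V hV f g = l2 v₁ v₂ (V * f) g := rfl

theorem bV_bound {v₁ v₂ : ℝ × ℝ} (h : LinearIndependent ℝ ![v₁, v₂])
    (V : ℝ × ℝ → ℝ) (hV : Continuous V) : ∃ M : ℝ, ∀ f g : SP v₁ v₂,
    |bV v₁ v₂ V hV f g| ≤ M / 2 * (l2 v₁ v₂ f f + l2 v₁ v₂ g g) := by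
  obtain ⟨M, hM⟩ := (cpt_compact v₁ v₂).exists_bound_of_continuousOn hV.continuousOn
  refine ⟨M, fun f g => ?_⟩
  have hf := f.2.1.continuous
  have hg := g.2.1.continuous
  rw [bV_apply]
  unfold l2
  rw [← integral_add (int_mulc v₁ v₂ hf hf) (int_mulc v₁ v₂ hg hg),
    ← integral_const_mul, ← Real.norm_eq_abs]
  refine norm_integral_le_of_norm_le
    (int_cont v₁ v₂ (continuous_const.mul ((hf.mul hf).add (hg.mul hg)))) ?_
  filter_upwards [ae_restrict_mem (fundDom_meas h)] with z hz
  have h1 := hM z (fundDom_sub _ _ hz)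
  simp only [Pi.mul_apply, norm_mul]
  have h2 : ‖(f : ℝ × ℝ → ℝ) z‖ * ‖(g : ℝ × ℝ → ℝ) z‖ ≤
    ((f : ℝ × ℝ → ℝ) z * (f : ℝ × ℝ → ℝ) z + (g : ℝ × ℝ → ℝ) z * (g : ℝ × ℝ → ℝ) z) / 2 := by
    have := two_mul_le_add_sq ‖(f : ℝ × ℝ → ℝ) z‖ ‖(g : ℝ × ℝ → ℝ) z‖
    simp only [Real.norm_eq_abs, sq_abs] at this ⊢
    nlinarith
  have h3 := mul_le_mul h1 h2 (by positivity) ((norm_nonneg _).trans h1)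
  calc _ = ‖V z‖ * (‖(f : ℝ × ℝ → ℝ) z‖ * ‖(g : ℝ × ℝ → ℝ) z‖) := by ring
    _ ≤ _ := h3
    _ = _ := by ring

theorem bound_of_half {H : Type*} [NormedAddCommGroup H] [InnerProductSpace ℝ H]
    (b : H →ₗ[ℝ] H →ₗ[ℝ] ℝ) (M : ℝ)
    (h : ∀ x y, |b x y| ≤ M / 2 * (inner ℝ x x + inner ℝ y y)) (x y : H) :
    |b x y| ≤ M * ‖x‖ * ‖y‖ := by
  by_cases hx : x = 0
  · simp [hx]
  by_cases hy : y = 0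
  · simp [hy]
  have hx' := norm_pos_iff.2 hx
  have hy' := norm_pos_iff.2 hy
  have := h (‖x‖⁻¹ • x) (‖y‖⁻¹ • y)
  simp only [map_smul, LinearMap.smul_apply, real_inner_smul_left, real_inner_smul_right,
    smul_eq_mul, abs_mul, abs_inv, abs_norm] at this
  rw [real_inner_self_eq_norm_sq, real_inner_self_eq_norm_sq] at this
  field_simp at this
  linarith

/-- the inner product core -/
@[reducible]
def spCore {v₁ v₂ : ℝ × ℝ} (h : LinearIndependent ℝ ![v₁, v₂]) :
    InnerProductSpace.Core ℝ (SP v₁ v₂) where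
  inner f g := l2 v₁ v₂ f g
  conj_inner_symm f g := by simpa using l2_comm _ _ _ _
  re_inner_nonneg f := by
    exact integral_nonneg (fun z => mul_self_nonneg ((f : ℝ × ℝ → ℝ) z))
  add_left f g k := by
    simp only [Submodule.coe_add]
    rw [l2_comm, l2_add _ _ k.2.1.continuous f.2.1.continuous g.2.1.continuous, l2_comm,
      l2_comm _ _ (k : ℝ × ℝ → ℝ)]
  smul_left f g c := by
    simp only [Submodule.coe_smul]
    rw [l2_comm, l2_smul, l2_comm]; simp
  definite f hf := Subtype.ext (eq_zero_of_l2 h f.2.1.continuous f.2.2 hf)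

end concrete

/-- `lim_{m→∞} λ_j^{(m)} = β_j` (with `j` 0-based, so the limit is the
`(j+1)`-st min-max value; the sequence is sampled at `m = j + 1 + k` so that the
`j`-th eigenvalue of `A_m` is defined). -/
theorem stmt1 (v₁ v₂ : ℝ × ℝ) (hindep : LinearIndependent ℝ ![v₁, v₂])
    (V : ℝ × ℝ → ℝ) (hVc : Continuous V) (hVp : LatPeriodic v₁ v₂ V)
    (u : ℕ → ℝ × ℝ → ℝ) (α : ℕ → ℝ)
    (hsm : ∀ i, ContDiff ℝ (⊤ : ℕ∞) (u i)) (hper : ∀ i, LatPeriodic v₁ v₂ (u i))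
    (hon : ∀ i j, l2 v₁ v₂ (u i) (u j) = if i = j then 1 else 0)
    (heig : ∀ i z, -(lap (u i) z) = α i * u i z)
    (hα : ∀ i, 0 ≤ α i)
    (hdense : ∀ f : ℝ × ℝ → ℝ, Measurable f → LatPeriodic v₁ v₂ f →
      IntegrableOn (fun z => f z ^ 2) (fundDom v₁ v₂) volume →
      ∀ ε : ℝ, 0 < ε → ∃ g ∈ Submodule.span ℝ (Set.range u),
        ∫ z in fundDom v₁ v₂, (f z - g z) ^ 2 < ε)
    (lam : (m : ℕ) → Fin m → ℝ)
    (hmono : ∀ m, Monotone (lam m))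
    (hdiag : ∀ m, ∃ P : Matrix (Fin m) (Fin m) ℝ, P * P.transpose = 1 ∧
      Amat v₁ v₂ V u α m = P * Matrix.diagonal (lam m) * P.transpose)
    (j : ℕ) :
    Tendsto (fun k : ℕ => lam (j + 1 + k) ⟨j, by omega⟩) atTop
      (nhds (minmax v₁ v₂ V (j + 1))) := by
  let core := spCore hindep
  let nacg : NormedAddCommGroup (SP v₁ v₂) := core.toNormedAddCommGroup
  let ips : InnerProductSpace ℝ (SP v₁ v₂) := InnerProductSpace.ofCore core.toCore
  have hin : ∀ f g : SP v₁ v₂, inner ℝ f g = l2 v₁ v₂ f g := fun f g => rfl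
  obtain ⟨M, hM⟩ := bV_bound hindep V hVc
  let e : ℕ → SP v₁ v₂ := fun i => ⟨u i, hsm i, hper i⟩
  have he : Orthonormal ℝ e := by
    rw [orthonormal_iff_ite]
    intro i k
    rw [hin]
    exact hon i k
  have hlapu : ∀ i, Lop v₁ v₂ (e i) = α i • e i := by
    intro i
    apply Subtype.ext
    funext z
    exact heig i z
  have hLsymm : ∀ f g, inner ℝ f (Lop v₁ v₂ g) = inner ℝ g (Lop v₁ v₂ f) := by
    intro f g
    have hg := green hindep f.2 g.2
    have : ∀ f g : SP v₁ v₂, inner ℝ f (Lop v₁ v₂ g) = - l2 v₁ v₂ f (lap g) := by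
      intro f g
      change inner ℝ f (-(⟨lap g, lap_mem g.2⟩ : SP v₁ v₂)) = _
      rw [inner_neg_right, hin]
    rw [this, this, hg]
  have hL : ∀ i f, inner ℝ (e i) (Lop v₁ v₂ f) = α i * inner ℝ (e i) f := by
    intro i f
    rw [hLsymm, hlapu, real_inner_smul_right, real_inner_comm]
  have hd : ∀ f : SP v₁ v₂, ∀ ε : ℝ, 0 < ε →
      ∃ g ∈ Submodule.span ℝ (Set.range e), ‖f - g‖ < ε := by
    intro f ε hε
    have hfc := f.2.1.continuous
    obtain ⟨g, hg, hlt⟩ := hdense f hfc.measurable f.2.2 (int_cont v₁ v₂ (hfc.pow 2)) (ε ^ 2)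
      (by positivity)
    have hr : Set.range u = (SP v₁ v₂).subtype '' Set.range e := by
      rw [← Set.range_comp]; rfl
    rw [hr, Submodule.span_image] at hg
    obtain ⟨g', hg', rfl⟩ := hg
    refine ⟨g', hg', ?_⟩
    have : ‖f - g'‖ ^ 2 < ε ^ 2 := by
      rw [← real_inner_self_eq_norm_sq, hin]
      refine lt_of_eq_of_lt ?_ hlt
      unfold l2
      congr 1; funext z; simp [sq]
    exact lt_of_pow_lt_pow_left₀ 2 hε.le this
  have hAm : ∀ m, Amat v₁ v₂ V u α m = AH (bV v₁ v₂ V hVc) e α m := fun m => rfl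
  have main := abs_main (Lop v₁ v₂) (bV v₁ v₂ V hVc) M (bound_of_half _ M hM) e he α hα hL hd
    lam hmono (fun m => by rw [← hAm]; exact hdiag m) j (fun k => by omega)
  have hQ : ∀ f : SP v₁ v₂, inner ℝ f (Lop v₁ v₂ f) - bV v₁ v₂ V hVc f f = Qf v₁ v₂ V f := by
    intro f
    have hfc := f.2.1.continuous
    have hlc : Continuous (lap f) := (lap_mem f.2).1.continuous
    rw [hin, bV_apply]
    unfold l2 Qf
    rw [← integral_sub (int_mulc v₁ v₂ hfc (Lop v₁ v₂ f).2.1.continuous)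
      (int_mulc v₁ v₂ (hVc.mul hfc) hfc)]
    congr 1; funext z
    change (f : ℝ × ℝ → ℝ) z * (-(lap f z)) - V z * (f : ℝ × ℝ → ℝ) z * (f : ℝ × ℝ → ℝ) z = _
    ring
  have hrq : ∀ W : Submodule ℝ (SP v₁ v₂), rq (Lop v₁ v₂) (bV v₁ v₂ V hVc) W =
      {q : ℝ | ∃ φ ∈ W.map (SP v₁ v₂).subtype, l2 v₁ v₂ φ φ = 1 ∧ q = Qf v₁ v₂ V φ} := by
    intro W
    ext q
    constructor
    · rintro ⟨φ, hφ, h1, rfl⟩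
      exact ⟨φ, ⟨φ, hφ, rfl⟩, h1, hQ φ⟩
    · rintro ⟨_, ⟨φ, hφ, rfl⟩, h1, rfl⟩
      exact ⟨φ, hφ, h1, (hQ φ).symm⟩
  have hfin : ∀ W : Submodule ℝ (SP v₁ v₂),
      Module.finrank ℝ (W.map (SP v₁ v₂).subtype) = Module.finrank ℝ W := fun W =>
    (Submodule.equivMapOfInjective _ (SP v₁ v₂).subtype_injective W).finrank_eq.symm
  have hset : minmax v₁ v₂ V (j + 1) = sInf {c : ℝ | ∃ W : Submodule ℝ (SP v₁ v₂),
      Module.finrank ℝ W = j + 1 ∧ c = sSup (rq (Lop v₁ v₂) (bV v₁ v₂ V hVc) W)} := by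
    unfold minmax
    congr 1
    ext c
    constructor
    · rintro ⟨W, hW, hf, rfl⟩
      have hWm : (W.comap (SP v₁ v₂).subtype).map (SP v₁ v₂).subtype = W := by
        rw [Submodule.map_comap_subtype]
        exact inf_eq_right.2 hW
      refine ⟨W.comap (SP v₁ v₂).subtype, ?_, ?_⟩
      · rw [← hfin, hWm, hf]
      · rw [hrq, hWm]
    · rintro ⟨W, hf, rfl⟩
      refine ⟨W.map (SP v₁ v₂).subtype, ?_, ?_, ?_⟩
      · rintro _ ⟨φ, _, rfl⟩
        exact φ.2
      · rw [hfin, hf]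
      · rw [hrq]
  rw [hset]
  exact main

end
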